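/- Let a, b, b', c be complex numbers with c not a nonpositive integer, and let x, y be real numbers with |x| < 1 and |y| < 1 such that |x/(x−1)| < 1 and |(y−x)/(1−x)| < 1. Then F₁(a; b, b'; c; x, y) = (1−x)^{−a} · F₁(a; c−b−b', b'; c; x/(x−1), (y−x)/(1−x)). -/

import Mathlib

noncomputable def poch (a : ℂ) (n : ℕ) : ℂ := ∏ i ∈ Finset.range n, (a + i)

/-- Appell series F₁(a;b,b';c;x,y). -/
noncomputable def appellF1 (a b b' c x y : ℂ) : ℂ :=
  ∑' p : ℕ × ℕ, poch a (p.1 + p.2) * poch b p.1 * poch b' p.2 /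
    (p.1.factorial * p.2.factorial * poch c (p.1 + p.2)) * x ^ p.1 * y ^ p.2
/-! Along the ray `t ↦ (t * x, t * y)` the Appell function is the power series
`∑ (a)_n / (c)_n * g_n(b, b'; x, y) * t ^ n`, where the `g_n` are the Lagrange polynomials. The
substitution `t ↦ t / (1 - t * x)` with prefactor `(1 - t * x) ^ (-a)` acts on power series
coefficients by the Pfaff transform with parameter `a`, and multiplication by `(a)_n / (c)_n`
intertwines the Pfaff transforms with parameters `c` and `a`. This reduces the transformation, for
`t` near `0`, to the case `a = c`, which is the elementary identity
`(1 - x) ^ (-b) * (1 - y) ^ (-b') = (1 - x) ^ (-c) * (1 - X) ^ (b + b' - c) * (1 - Y) ^ (-b')` for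
`X = x / (x - 1)` and `Y = (y - x) / (1 - x)`. Both sides being analytic in `t` along the segment
`[0, 1]`, on which the two Appell series keep converging, they agree at `t = 1`.
-/

open Complex Filter Finset FormalMultilinearSeries Topology

theorem hasSum_sum_antidiagonal {A α : Type*} [AddCommMonoid A] [HasAntidiagonal A]
    [AddCommMonoid α] [TopologicalSpace α] [ContinuousAdd α] [RegularSpace α]
    {f : A × A → α} {s : α} (h : HasSum f s) :
    HasSum (fun n ↦ ∑ p ∈ antidiagonal n, f p) s := by
  refine (HasAntidiagonal.sigmaAntidiagonalEquivProd.hasSum_iff.2 h).sigma fun n ↦ ?_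
  simpa only [sum_coe_sort (antidiagonal n) f] using!
    hasSum_fintype (fun p : antidiagonal n ↦ f p)

section ScalarPowerSeries

variable {𝕜 : Type*} [NontriviallyNormedField 𝕜] {f g : 𝕜 → 𝕜} {A : ℕ → 𝕜}

theorem hasFPowerSeriesAt_ofScalars_zero_iff :
    HasFPowerSeriesAt f (ofScalars 𝕜 A) 0 ↔
      ∀ᶠ t in 𝓝 0, HasSum (fun n ↦ A n * t ^ n) (f t) := by
  simp only [hasFPowerSeriesAt_iff, coeff_ofScalars, smul_eq_mul, zero_add, mul_comm]

theorem eventuallyEq_of_hasFPowerSeriesAt_ofScalars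
    (hf : HasFPowerSeriesAt f (ofScalars 𝕜 A) 0) (hg : HasFPowerSeriesAt g (ofScalars 𝕜 A) 0) :
    f =ᶠ[𝓝 0] g := by
  rw [hasFPowerSeriesAt_ofScalars_zero_iff] at hf hg
  filter_upwards [hf, hg] with t hft hgt
  exact hft.unique hgt

theorem eventually_norm_mul_lt_one (x : 𝕜) : ∀ᶠ t : 𝕜 in 𝓝 0, ‖t * x‖ < 1 :=
  (Continuous.tendsto (by fun_prop : Continuous fun t : 𝕜 ↦ ‖t * x‖) 0).eventually_lt_const
    (by simp)

end ScalarPowerSeries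

theorem ascPochhammer_eval_eq_prod_range {R : Type*} [CommSemiring R] (n : ℕ) (a : R) :
    (ascPochhammer R n).eval a = ∏ i ∈ range n, (a + i) := by
  induction n with
  | zero => simp
  | succ n ih => rw [ascPochhammer_succ_eval, ih, prod_range_succ]

theorem poch_eq_ascPochhammer_eval (a : ℂ) (n : ℕ) : poch a n = (ascPochhammer ℂ n).eval a :=
  (ascPochhammer_eval_eq_prod_range n a).symm

theorem poch_add (a : ℂ) (m n : ℕ) : poch a (m + n) = poch a m * poch (a + m) n := by
  simp only [poch, prod_range_add, Nat.cast_add, add_assoc]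

theorem poch_ne_zero {c : ℂ} (hc : ∀ n : ℕ, c ≠ -(n : ℂ)) (n : ℕ) : poch c n ≠ 0 :=
  prod_ne_zero_iff.2 fun i _ h ↦ hc i (eq_neg_of_add_eq_zero_left h)

theorem exists_norm_poch_div_poch_mul_pow_le (a : ℂ) {c : ℂ} (hc : ∀ n : ℕ, c ≠ -(n : ℂ))
    {r : NNReal} (hr : r < 1) :
    ∃ C, ∀ n, ‖poch a n / poch c n‖ * r ^ n ≤ C := by
  have one_le_radius : 1 ≤ (ordinaryHypergeometricSeries ℂ a 1 c).radius := by
    by_cases ha : ∃ k : ℕ, a = -k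
    · obtain ⟨k, rfl⟩ := ha
      simp [ordinaryHypergeometric_radius_top_of_neg_nat₁]
    · push Not at ha
      refine (ordinaryHypergeometricSeries_radius_eq_one ℂ a 1 c fun n ↦ ⟨?_, ?_, ?_⟩).ge
      · exact fun h ↦ ha n (by simp [h])
      · exact fun h ↦ Nat.cast_add_one_ne_zero (R := ℂ) n (by simp [h])
      · exact fun h ↦ hc n (by simp [h])
  obtain ⟨C, -, hC⟩ := norm_mul_pow_le_of_lt_radius _
    ((ENNReal.coe_lt_one_iff.2 hr).trans_le one_le_radius)
  refine ⟨C, fun n ↦ ?_⟩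
  have hn : (n.factorial : ℂ) ≠ 0 := mod_cast n.factorial_ne_zero
  convert hC n using 2
  rw [ordinaryHypergeometricSeries, ofScalars_norm, ordinaryHypergeometricCoefficient,
    ascPochhammer_eval_one, ← poch_eq_ascPochhammer_eval, ← poch_eq_ascPochhammer_eval]
  field_simp

theorem factorial_mul_multichoose {K : Type*} [Field K] [BinomialRing K] (a : K) (n : ℕ) :
    n.factorial * Ring.multichoose a n = ∏ i ∈ range n, (a + i) := by
  rw [← nsmul_eq_mul, Ring.factorial_nsmul_multichoose_eq_ascPochhammer,
    Polynomial.ascPochhammer_smeval_eq_eval, ascPochhammer_eval_eq_prod_range]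

theorem multichoose_eq_poch_div_factorial (a : ℂ) (n : ℕ) :
    Ring.multichoose a n = poch a n / n.factorial := by
  rw [poch, ← factorial_mul_multichoose,
    mul_div_cancel_left₀ _ (mod_cast n.factorial_ne_zero)]

theorem norm_multichoose_le_of_norm_le {a : ℂ} {α : ℝ} (h : ‖a‖ ≤ α) (n : ℕ) :
    ‖Ring.multichoose a n‖ ≤ Ring.multichoose α n := by
  have hn : (0 : ℝ) < n.factorial := mod_cast n.factorial_pos
  refine le_of_mul_le_mul_left ?_ hn
  rw [factorial_mul_multichoose, ← norm_natCast (n.factorial), ← norm_mul,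
    factorial_mul_multichoose, norm_prod]
  exact prod_le_prod (fun _ _ ↦ norm_nonneg _) fun i _ ↦ (norm_add_le _ _).trans (by simpa)

theorem hasSum_multichoose_cpow (a : ℂ) {z : ℂ} (hz : ‖z‖ < 1) :
    HasSum (fun n ↦ Ring.multichoose a n * z ^ n) ((1 - z) ^ (-a)) := by
  have := (one_div_one_sub_cpow_hasFPowerSeriesOnBall_zero a).hasSum (y := z)
    (by simpa [← ofReal_norm] using hz)
  simpa [Ring.multichoose_eq, cpow_neg, mul_comm] using this

theorem hasSum_multichoose_rpow (a : ℝ) {z : ℝ} (hz : |z| < 1) :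
    HasSum (fun n ↦ Ring.multichoose a n * z ^ n) ((1 - z) ^ (-a)) := by
  have := (Real.one_div_one_sub_rpow_hasFPowerSeriesOnBall_zero a).hasSum (y := z)
    (by simpa [← ofReal_norm] using hz)
  rw [Real.rpow_neg (sub_nonneg.2 (abs_lt.1 hz).2.le)]
  simpa [Ring.multichoose_eq, mul_comm] using this

theorem div_cpow_of_re_pos {u w : ℂ} (hw : 0 < w.re) (hu : 0 < u.re) (s : ℂ) :
    (w / u) ^ s = w ^ s / u ^ s := by
  have hu0 : u ≠ 0 := by rintro rfl; simp at hu
  have hw0 : w ≠ 0 := by rintro rfl; simp at hw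
  have arg_u := abs_lt.1 (abs_arg_lt_pi_div_two_iff.2 (Or.inl hu))
  have arg_w := abs_lt.1 (abs_arg_lt_pi_div_two_iff.2 (Or.inl hw))
  have arg_u_ne_pi : u.arg ≠ Real.pi := by linarith [Real.pi_pos]
  have log_div : log (w / u) = log w - log u := by
    rw [div_eq_mul_inv, log_mul hw0 (inv_ne_zero hu0), log_inv _ arg_u_ne_pi, sub_eq_add_neg]
    rw [arg_inv, if_neg arg_u_ne_pi]
    constructor <;> linarith
  rw [cpow_def_of_ne_zero (div_ne_zero hw0 hu0), cpow_def_of_ne_zero hw0,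
    cpow_def_of_ne_zero hu0, ← exp_sub, log_div, sub_mul]

theorem one_sub_re_pos {z : ℂ} (hz : ‖z‖ < 1) : 0 < (1 - z).re := by
  simpa using (re_le_norm z).trans_lt hz

/-- The bivariate Lagrange polynomial of degree `n`, i.e. the coefficient of `t ^ n` in
`(1 - t * x) ^ (-b) * (1 - t * y) ^ (-b')`; the binomial coefficient `Ring.multichoose b m` is
`(b)_m / m!`. -/
noncomputable def lagrangePoly (b b' x y : ℂ) (n : ℕ) : ℂ :=
  ∑ p ∈ antidiagonal n, Ring.multichoose b p.1 * x ^ p.1 * (Ring.multichoose b' p.2 * y ^ p.2)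

theorem lagrangePoly_mul_mul (b b' t x y : ℂ) (n : ℕ) :
    lagrangePoly b b' (t * x) (t * y) n = lagrangePoly b b' x y n * t ^ n := by
  rw [lagrangePoly, lagrangePoly, sum_mul]
  refine sum_congr rfl fun p hp ↦ ?_
  rw [← mem_antidiagonal.1 hp]
  ring

theorem hasSum_lagrangePoly (b b' : ℂ) {x y : ℂ} (hx : ‖x‖ < 1) (hy : ‖y‖ < 1) :
    HasSum (fun n ↦ lagrangePoly b b' x y n) ((1 - x) ^ (-b) * (1 - y) ^ (-b')) := by
  have hbx := hasSum_multichoose_cpow b hx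
  have hby := hasSum_multichoose_cpow b' hy
  rw [← hbx.tsum_eq, ← hby.tsum_eq,
    tsum_mul_tsum_eq_tsum_sum_antidiagonal_of_summable_norm hbx.summable.norm hby.summable.norm]
  exact (summable_norm_sum_mul_antidiagonal_of_summable_norm hbx.summable.norm
    hby.summable.norm).of_norm.hasSum

theorem hasFPowerSeriesAt_lagrangePoly (b b' x y : ℂ) :
    HasFPowerSeriesAt (fun t ↦ (1 - t * x) ^ (-b) * (1 - t * y) ^ (-b'))
      (ofScalars ℂ (lagrangePoly b b' x y)) 0 := by
  rw [hasFPowerSeriesAt_ofScalars_zero_iff]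
  filter_upwards [eventually_norm_mul_lt_one x, eventually_norm_mul_lt_one y] with t hx hy
  simpa only [lagrangePoly_mul_mul] using hasSum_lagrangePoly _ _ hx hy

/-- The sequence of Taylor coefficients of `(1 - t * x) ^ (-a) * f (t / (1 - t * x))` at `t = 0`
for `f = ∑ A n * t ^ n`: the linear map underlying Pfaff's transformation of hypergeometric
series. -/
noncomputable def pfaffTransform (a x : ℂ) (A : ℕ → ℂ) (n : ℕ) : ℂ :=
  ∑ p ∈ antidiagonal n, A p.1 * (Ring.multichoose (a + p.1) p.2 * x ^ p.2)

theorem poch_div_poch_mul_pfaffTransform (a : ℂ) {c : ℂ} (hc : ∀ n : ℕ, c ≠ -(n : ℂ)) (x : ℂ)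
    (A : ℕ → ℂ) (n : ℕ) :
    poch a n / poch c n * pfaffTransform c x A n =
      pfaffTransform a x (fun m ↦ poch a m / poch c m * A m) n := by
  rw [pfaffTransform, pfaffTransform, mul_sum]
  refine sum_congr rfl fun p hp ↦ ?_
  have hcn := poch_ne_zero hc (p.1 + p.2)
  rw [poch_add] at hcn
  have hcp := left_ne_zero_of_mul hcn
  have hcq := right_ne_zero_of_mul hcn
  rw [← mem_antidiagonal.1 hp, poch_add a, poch_add c, multichoose_eq_poch_div_factorial,
    multichoose_eq_poch_div_factorial]
  field_simp

theorem summable_norm_mul_multichoose (a : ℂ) {A : ℕ → ℂ} {t x : ℂ} (hx : ‖t * x‖ < 1)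
    (hA : Summable fun n ↦ ‖A n‖ * (‖t‖ / (1 - ‖t * x‖)) ^ n) :
    Summable fun p : ℕ × ℕ ↦
      A p.1 * t ^ p.1 * (Ring.multichoose (a + p.1) p.2 * (t * x) ^ p.2) := by
  have hpos : 0 < 1 - ‖t * x‖ := sub_pos.2 hx
  let majorant (p : ℕ × ℕ) : ℝ :=
    ‖A p.1 * t ^ p.1‖ * (Ring.multichoose (‖a‖ + p.1) p.2 * ‖t * x‖ ^ p.2)
  have term_le (p : ℕ × ℕ) :
      ‖A p.1 * t ^ p.1 * (Ring.multichoose (a + p.1) p.2 * (t * x) ^ p.2)‖ ≤ majorant p := by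
    dsimp only [majorant]
    rw [norm_mul, norm_mul (Ring.multichoose _ _), norm_pow (t * x)]
    gcongr
    exact norm_multichoose_le_of_norm_le ((norm_add_le _ _).trans (by simp)) _
  have row_sum (m : ℕ) : HasSum (fun k ↦ majorant (m, k))
      ((1 - ‖t * x‖) ^ (-‖a‖) * (‖A m‖ * (‖t‖ / (1 - ‖t * x‖)) ^ m)) := by
    convert! (hasSum_multichoose_rpow (‖a‖ + m) (z := ‖t * x‖)
      (by rwa [abs_norm])).mul_left ‖A m * t ^ m‖ using 1
    rw [neg_add, ← sub_eq_add_neg, Real.rpow_sub hpos, Real.rpow_natCast, norm_mul (A m), norm_pow,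
      div_pow]
    ring
  refine Summable.of_norm_bounded ((summable_prod_of_nonneg ?_).2 ⟨?_, ?_⟩) term_le
  · exact fun p ↦ (norm_nonneg _).trans (term_le p)
  · exact fun m ↦ (row_sum m).summable
  · simpa only [(row_sum _).tsum_eq] using hA.mul_left _

theorem hasSum_pfaffTransform (a : ℂ) {A : ℕ → ℂ} {t x s : ℂ} (hx : ‖t * x‖ < 1)
    (hA : Summable fun n ↦ ‖A n‖ * (‖t‖ / (1 - ‖t * x‖)) ^ n)
    (hs : HasSum (fun n ↦ A n * (t / (1 - t * x)) ^ n) s) :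
    HasSum (fun n ↦ pfaffTransform a x A n * t ^ n) ((1 - t * x) ^ (-a) * s) := by
  have hne : 1 - t * x ≠ 0 := slitPlane_ne_zero (Or.inl (one_sub_re_pos hx))
  have hF := (summable_norm_mul_multichoose a hx hA).hasSum
  have row_sum (m : ℕ) :
      HasSum (fun k ↦ A m * t ^ m * (Ring.multichoose (a + m) k * (t * x) ^ k))
        ((1 - t * x) ^ (-a) * (A m * (t / (1 - t * x)) ^ m)) := by
    convert! (hasSum_multichoose_cpow (a + m) hx).mul_left (A m * t ^ m) using 1
    rw [neg_add, ← sub_eq_add_neg, cpow_sub _ _ hne, cpow_natCast, div_pow]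
    ring
  rw [(hs.mul_left _).unique (hF.prod_fiberwise row_sum)]
  convert hasSum_sum_antidiagonal hF using 2 with n
  rw [pfaffTransform, sum_mul]
  refine sum_congr rfl fun p hp ↦ ?_
  rw [← mem_antidiagonal.1 hp]
  ring

theorem hasFPowerSeriesAt_pfaffTransform (a x : ℂ) {f : ℂ → ℂ} {A : ℕ → ℂ}
    (hf : HasFPowerSeriesAt f (ofScalars ℂ A) 0) :
    HasFPowerSeriesAt (fun t ↦ (1 - t * x) ^ (-a) * f (t / (1 - t * x)))
      (ofScalars ℂ (pfaffTransform a x A)) 0 := by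
  rw [hasFPowerSeriesAt_ofScalars_zero_iff] at hf ⊢
  have tendsto_arg : Tendsto (fun t : ℂ ↦ t / (1 - t * x)) (𝓝 0) (𝓝 0) := by
    have : ContinuousAt (fun t : ℂ ↦ t / (1 - t * x)) 0 :=
      ContinuousAt.div (by fun_prop) (by fun_prop) (by simp)
    simpa [ContinuousAt] using this
  have tendsto_majorant :
      Tendsto (fun t : ℂ ↦ ((‖t‖ / (1 - ‖t * x‖) : ℝ) : ℂ)) (𝓝 0) (𝓝 0) := by
    have : ContinuousAt (fun t : ℂ ↦ ‖t‖ / (1 - ‖t * x‖)) 0 :=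
      ContinuousAt.div (by fun_prop) (by fun_prop) (by simp)
    have := continuous_ofReal.continuousAt.comp this
    simpa only [ContinuousAt, Function.comp_def, norm_zero, zero_div, ofReal_zero] using this
  filter_upwards [eventually_norm_mul_lt_one x, tendsto_arg.eventually hf,
    tendsto_majorant.eventually hf] with t hx hs hmaj
  refine hasSum_pfaffTransform a hx ?_ hs
  have norm_eq : ‖((‖t‖ / (1 - ‖t * x‖) : ℝ) : ℂ)‖ = ‖t‖ / (1 - ‖t * x‖) :=
    Complex.norm_of_nonneg (div_nonneg (norm_nonneg t) (sub_pos.2 hx).le)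
  simpa only [norm_mul (A _), norm_pow, norm_eq] using hmaj.summable.norm

theorem lagrangePoly_eq_pfaffTransform (b b' c x y : ℂ) :
    lagrangePoly b b' x y = pfaffTransform c x (lagrangePoly (c - b - b') b' (-x) (y - x)) := by
  apply ofScalars_series_injective ℂ ℂ
  refine (hasFPowerSeriesAt_lagrangePoly b b' x y).eq_formalMultilinearSeries
    ((hasFPowerSeriesAt_pfaffTransform c x (hasFPowerSeriesAt_lagrangePoly _ _ _ _)).congr ?_)
  filter_upwards [eventually_norm_mul_lt_one x, eventually_norm_mul_lt_one y] with t hx hy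
  have hu := one_sub_re_pos hx
  have hw := one_sub_re_pos hy
  have hu0 : 1 - t * x ≠ 0 := slitPlane_ne_zero (Or.inl hu)
  have fst_eq : 1 - t / (1 - t * x) * -x = 1 / (1 - t * x) := by
    field_simp
    ring
  have snd_eq : 1 - t / (1 - t * x) * (y - x) = (1 - t * y) / (1 - t * x) := by
    field_simp
    ring
  rw [fst_eq, snd_eq, div_cpow_of_re_pos (by simp) hu, div_cpow_of_re_pos hw hu, one_cpow]
  have exponents : -b = -c - -(c - b - b') - -b' := by ring
  rw [exponents, cpow_sub _ _ hu0, cpow_sub _ _ hu0]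
  ring

/-- The general term of the double series `appellF1`, with the ratio `(a)_{m+n} / (c)_{m+n}` split
off from the binomial series in `x` and in `y`. -/
noncomputable def appellF1Term (a b b' c x y : ℂ) (p : ℕ × ℕ) : ℂ :=
  poch a (p.1 + p.2) / poch c (p.1 + p.2) *
    (Ring.multichoose b p.1 * x ^ p.1 * (Ring.multichoose b' p.2 * y ^ p.2))

theorem appellF1_eq_tsum (a b b' c x y : ℂ) :
    appellF1 a b b' c x y = ∑' p, appellF1Term a b b' c x y p := by
  refine tsum_congr fun p ↦ ?_
  simp only [appellF1Term, multichoose_eq_poch_div_factorial, div_eq_mul_inv, mul_inv]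
  ring

theorem norm_appellF1Term_le (a b b' c : ℂ) {x y x' y' : ℂ} (hx : ‖x‖ ≤ ‖x'‖) (hy : ‖y‖ ≤ ‖y'‖)
    (p : ℕ × ℕ) : ‖appellF1Term a b b' c x y p‖ ≤ ‖appellF1Term a b b' c x' y' p‖ := by
  simp only [appellF1Term, norm_mul, norm_pow]
  gcongr

theorem summable_appellF1Term (a b b' : ℂ) {c : ℂ} (hc : ∀ n : ℕ, c ≠ -(n : ℂ)) {x y : ℂ}
    (hx : ‖x‖ < 1) (hy : ‖y‖ < 1) : Summable (appellF1Term a b b' c x y) := by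
  obtain ⟨r, hr, hr1⟩ := exists_between (max_lt (show ‖x‖₊ < 1 from hx) (show ‖y‖₊ < 1 from hy))
  have hr0 : 0 < r := hr.pos
  obtain ⟨C, hC⟩ := exists_norm_poch_div_poch_mul_pow_le a hc hr1
  have summable_binomial (β : ℂ) {z : ℂ} (hz : ‖z‖₊ < r) :
      Summable fun n ↦ ‖Ring.multichoose β n * (z / r) ^ n‖ := by
    refine (hasSum_multichoose_cpow β ?_).summable.norm
    rw [norm_div, div_lt_one (by simpa)]
    rwa [norm_real, NNReal.norm_eq]
  refine Summable.of_norm_bounded (((summable_binomial b (max_lt_iff.1 hr).1).mul_of_nonneg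
    (summable_binomial b' (max_lt_iff.1 hr).2) ?_ ?_).mul_left C) fun p ↦ ?_
  iterate 2 exact fun _ ↦ norm_nonneg _
  calc ‖appellF1Term a b b' c x y p‖
      = ‖poch a (p.1 + p.2) / poch c (p.1 + p.2)‖ * r ^ (p.1 + p.2) *
          (‖Ring.multichoose b p.1 * (x / r) ^ p.1‖ *
            ‖Ring.multichoose b' p.2 * (y / r) ^ p.2‖) := by
        simp only [appellF1Term, norm_mul, norm_div, norm_pow, norm_real, NNReal.norm_eq, pow_add,
          div_pow]
        field_simp
    _ ≤ _ := by gcongr; exact hC _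

theorem hasSum_appellF1 (a b b' : ℂ) {c : ℂ} (hc : ∀ n : ℕ, c ≠ -(n : ℂ)) {x y : ℂ}
    (hx : ‖x‖ < 1) (hy : ‖y‖ < 1) :
    HasSum (fun n ↦ poch a n / poch c n * lagrangePoly b b' x y n) (appellF1 a b b' c x y) := by
  rw [appellF1_eq_tsum]
  convert hasSum_sum_antidiagonal (summable_appellF1Term a b b' hc hx hy).hasSum using 2 with n
  rw [lagrangePoly, mul_sum]
  refine sum_congr rfl fun p hp ↦ ?_
  rw [appellF1Term, mem_antidiagonal.1 hp]

theorem hasFPowerSeriesAt_appellF1 (a b b' : ℂ) {c : ℂ} (hc : ∀ n : ℕ, c ≠ -(n : ℂ)) (x y : ℂ) :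
    HasFPowerSeriesAt (fun t ↦ appellF1 a b b' c (t * x) (t * y))
      (ofScalars ℂ fun n ↦ poch a n / poch c n * lagrangePoly b b' x y n) 0 := by
  rw [hasFPowerSeriesAt_ofScalars_zero_iff]
  filter_upwards [eventually_norm_mul_lt_one x, eventually_norm_mul_lt_one y] with t hx hy
  simpa only [lagrangePoly_mul_mul, mul_assoc] using hasSum_appellF1 a b b' hc hx hy

theorem differentiableAt_appellF1Term_comp (a b b' c : ℂ) {f g : ℂ → ℂ} {z : ℂ}
    (hf : DifferentiableAt ℂ f z) (hg : DifferentiableAt ℂ g z) (p : ℕ × ℕ) :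
    DifferentiableAt ℂ (fun t ↦ appellF1Term a b b' c (f t) (g t) p) z := by
  simp only [appellF1Term]
  exact (((hf.pow _).const_mul _).mul ((hg.pow _).const_mul _)).const_mul _

theorem analyticAt_appellF1_comp (a b b' : ℂ) {c : ℂ} (hc : ∀ n : ℕ, c ≠ -(n : ℂ)) {f g : ℂ → ℂ}
    {z : ℂ} (hf : AnalyticAt ℂ f z) (hg : AnalyticAt ℂ g z) (hfz : ‖f z‖ < 1) (hgz : ‖g z‖ < 1) :
    AnalyticAt ℂ (fun t ↦ appellF1 a b b' c (f t) (g t)) z := by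
  obtain ⟨r, hfr, hr⟩ := exists_between hfz
  obtain ⟨s, hgs, hs⟩ := exists_between hgz
  have norm_r : ‖(r : ℂ)‖ = r := Complex.norm_of_nonneg ((norm_nonneg _).trans hfr.le)
  have norm_s : ‖(s : ℂ)‖ = s := Complex.norm_of_nonneg ((norm_nonneg _).trans hgs.le)
  have summable_bound : Summable fun p ↦ ‖appellF1Term a b b' c (r : ℂ) (s : ℂ) p‖ :=
    (summable_appellF1Term a b b' hc (norm_r.trans_lt hr) (norm_s.trans_lt hs)).norm
  obtain ⟨U, hU, U_open, hzU⟩ := eventually_nhds_iff.1 <|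
    (hf.eventually_analyticAt.and hg.eventually_analyticAt).and <|
      (hf.continuousAt.norm.eventually_lt_const hfr).and
        (hg.continuousAt.norm.eventually_lt_const hgs)
  have term_differentiableOn (p : ℕ × ℕ) :
      DifferentiableOn ℂ (fun t ↦ appellF1Term a b b' c (f t) (g t) p) U := fun w hw ↦
    (differentiableAt_appellF1Term_comp a b b' c (hU w hw).1.1.differentiableAt
      (hU w hw).1.2.differentiableAt p).differentiableWithinAt
  have term_le (p : ℕ × ℕ) (w : ℂ) (hw : w ∈ U) :
      ‖appellF1Term a b b' c (f w) (g w) p‖ ≤ ‖appellF1Term a b b' c (r : ℂ) (s : ℂ) p‖ :=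
    norm_appellF1Term_le a b b' c ((hU w hw).2.1.le.trans_eq norm_r.symm)
      ((hU w hw).2.2.le.trans_eq norm_s.symm) p
  simp only [appellF1_eq_tsum]
  exact (differentiableOn_tsum_of_summable_norm summable_bound term_differentiableOn U_open
    term_le).analyticAt (U_open.mem_nhds hzU)

theorem appellF1_eventuallyEq (a b b' : ℂ) {c : ℂ} (hc : ∀ n : ℕ, c ≠ -(n : ℂ)) (x y : ℂ) :
    (fun t ↦ appellF1 a b b' c (t * x) (t * y)) =ᶠ[𝓝 0] fun t ↦ (1 - t * x) ^ (-a) *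
      appellF1 a (c - b - b') b' c (t * x / (t * x - 1)) ((t * y - t * x) / (1 - t * x)) := by
  have hF := hasFPowerSeriesAt_appellF1 a b b' hc x y
  have hG := hasFPowerSeriesAt_pfaffTransform a x
    (hasFPowerSeriesAt_appellF1 a (c - b - b') b' hc (-x) (y - x))
  have coeff_eq : (fun n ↦ poch a n / poch c n * lagrangePoly b b' x y n) =
      pfaffTransform a x
        fun n ↦ poch a n / poch c n * lagrangePoly (c - b - b') b' (-x) (y - x) n := by
    funext n
    rw [lagrangePoly_eq_pfaffTransform b b' c, poch_div_poch_mul_pfaffTransform a hc]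
  rw [coeff_eq] at hF
  convert eventuallyEq_of_hasFPowerSeriesAt_ofScalars hF hG using 4 with t
  · rw [← neg_sub 1 (t * x), div_neg]
    ring
  · ring

theorem norm_smul_lt_norm_one_sub_smul {x w : ℂ} {θ : ℝ} (hθ0 : 0 ≤ θ) (hθ1 : θ ≤ 1)
    (hx : x.re ≤ 1) (hw : ‖w‖ < ‖1 - x‖) : ‖θ • w‖ < ‖1 - θ • x‖ := by
  rcases hθ0.eq_or_lt with rfl | hθ
  · simp
  have scaled_le : ‖θ • (1 - x)‖ ≤ ‖1 - θ • x‖ := by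
    rw [← sq_le_sq₀ (norm_nonneg _) (norm_nonneg _), ← normSq_eq_norm_sq, ← normSq_eq_norm_sq]
    simp only [normSq_apply, sub_re, sub_im, one_re, one_im, smul_re, smul_im, smul_eq_mul]
    nlinarith [mul_nonneg (sub_nonneg.2 hθ1) (mul_nonneg hθ.le (sub_nonneg.2 hx)),
      sq_nonneg (1 - θ)]
  calc ‖θ • w‖ < ‖θ • (1 - x)‖ := by
        rw [norm_smul, norm_smul]
        gcongr
        simpa using hθ.ne'
    _ ≤ ‖1 - θ • x‖ := scaled_le

/-- The pairs `(x, y)` for which `(x, y)` and its image `(x / (x - 1), (y - x) / (1 - x))` both lie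
in the bidisc of convergence of `appellF1`. -/
def appellF1TransformationDomain : Set (ℂ × ℂ) :=
  {z | ‖z.1‖ < 1 ∧ ‖z.2‖ < 1 ∧ ‖z.1 / (z.1 - 1)‖ < 1 ∧ ‖(z.2 - z.1) / (1 - z.1)‖ < 1}

theorem mem_appellF1TransformationDomain_iff {x y : ℂ} : (x, y) ∈ appellF1TransformationDomain ↔
    ‖x‖ < 1 ∧ ‖y‖ < 1 ∧ ‖x‖ < ‖1 - x‖ ∧ ‖y - x‖ < ‖1 - x‖ := by
  refine and_congr_right fun hx ↦ and_congr_right fun _ ↦ ?_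
  have hpos : 0 < ‖1 - x‖ := norm_pos_iff.2 (slitPlane_ne_zero (Or.inl (one_sub_re_pos hx)))
  simp only [norm_div, norm_sub_rev x 1, div_lt_one hpos]

theorem starConvex_appellF1TransformationDomain : StarConvex ℝ 0 appellF1TransformationDomain := by
  refine starConvex_zero_iff.2 ?_
  rintro ⟨x, y⟩ hxy θ hθ0 hθ1
  rw [mem_appellF1TransformationDomain_iff] at hxy
  obtain ⟨hx, hy, hxx, hyx⟩ := hxy
  have smul_lt {w : ℂ} (hw : ‖w‖ < 1) : ‖θ • w‖ < 1 := by
    rw [norm_smul, Real.norm_of_nonneg hθ0]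
    exact (mul_le_of_le_one_left (norm_nonneg _) hθ1).trans_lt hw
  have hre : x.re ≤ 1 := (re_le_norm x).trans hx.le
  refine mem_appellF1TransformationDomain_iff.2 ⟨smul_lt hx, smul_lt hy, ?_, ?_⟩
  · exact norm_smul_lt_norm_one_sub_smul hθ0 hθ1 hre hxx
  · rw [← smul_sub]
    exact norm_smul_lt_norm_one_sub_smul hθ0 hθ1 hre hyx

theorem appellF1_transformation_second_general (a b b' c x y : ℂ) (hc : ∀ n : ℕ, c ≠ -(n : ℂ))
    (hx : ‖x‖ < 1) (hy : ‖y‖ < 1) (hx' : ‖x / (x - 1)‖ < 1) (hyx : ‖(y - x) / (1 - x)‖ < 1) :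
    appellF1 a b b' c x y =
      (1 - x) ^ (-a) * appellF1 a (c - b - b') b' c (x / (x - 1)) ((y - x) / (1 - x)) := by
  have mem_domain : ∀ t ∈ segment ℝ (0 : ℂ) 1, (t * x, t * y) ∈ appellF1TransformationDomain := by
    rw [segment_eq_image]
    rintro _ ⟨θ, hθ, rfl⟩
    simpa using starConvex_appellF1TransformationDomain.smul_mem (x := (x, y))
      ⟨hx, hy, hx', hyx⟩ hθ.1 hθ.2
  have analytic_left : AnalyticOnNhd ℂ (fun t ↦ appellF1 a b b' c (t * x) (t * y))
      (segment ℝ 0 1) := fun t ht ↦ by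
    obtain ⟨htx, hty, -⟩ := mem_domain t ht
    exact analyticAt_appellF1_comp a b b' hc (by fun_prop) (by fun_prop) htx hty
  have analytic_right : AnalyticOnNhd ℂ (fun t ↦ (1 - t * x) ^ (-a) *
      appellF1 a (c - b - b') b' c (t * x / (t * x - 1)) ((t * y - t * x) / (1 - t * x)))
      (segment ℝ 0 1) := fun t ht ↦ by
    obtain ⟨htx, -, htx', htyx⟩ := mem_domain t ht
    have slit : 1 - t * x ∈ slitPlane := Or.inl (one_sub_re_pos htx)
    have hne : 1 - t * x ≠ 0 := slitPlane_ne_zero slit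
    have hne' : t * x - 1 ≠ 0 := neg_sub 1 (t * x) ▸ neg_ne_zero.2 hne
    refine AnalyticAt.mul (by fun_prop (disch := assumption)) ?_
    exact analyticAt_appellF1_comp a _ b' hc (by fun_prop (disch := assumption))
      (by fun_prop (disch := assumption)) htx' htyx
  simpa using analytic_left.eqOn_of_preconnected_of_eventuallyEq analytic_right
    (convex_segment _ _).isPreconnected (left_mem_segment ℝ _ _)
    (appellF1_eventuallyEq a b b' hc x y) (right_mem_segment ℝ _ _)

theorem appellF1_transformation_second (a b b' c : ℂ) (x y : ℝ)
    (hc : ∀ n : ℕ, c ≠ -(n : ℂ))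
    (hx : |x| < 1) (hy : |y| < 1)
    (hx' : |x / (x - 1)| < 1) (hyx : |(y - x) / (1 - x)| < 1) :
    appellF1 a b b' c x y =
      ((1 : ℂ) - x) ^ (-a) *
        appellF1 a (c - b - b') b' c ((x : ℂ) / (x - 1)) (((y : ℂ) - x) / (1 - x)) := by
  refine appellF1_transformation_second_general a b b' c x y hc ?_ ?_ ?_ ?_ <;>
    norm_cast
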